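/- Assume F has characteristic 2, let k ≥ 2, and suppose u ∈ F^{2^k} satisfies u(0) = u(1) = u(2) = 0 (a Type-IV node: the first three positions are frozen, all others arbitrary). Let c be the associated codeword. Then there exists ρ ∈ F such that for every 0 ≤ b < 4: ∑_{a=0}^{2^{k−2}−1} g0inv^{(k−2)}(a)·c(4a + b) = r^{(2)}(b)·ρ, where r^{(2)} is the last row of G2^{⊗2}. (Paper's Theorem 5.) -/

import Mathlib

open Finset

variable {F : Type*}

/-- Kronecker power of a 2×2 matrix, defined by the binary-digit product formula:
the `(i,j)` entry of `kron M k` is `∏ t < k, M i_t j_t` where `i_t, j_t` are the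
`t`-th binary digits of `i` and `j`. -/
noncomputable def kron [Field F] (M : Matrix (Fin 2) (Fin 2) F) (k : ℕ) :
    Matrix (Fin (2 ^ k)) (Fin (2 ^ k)) F :=
  fun i j => ∏ t ∈ Finset.range k,
    M (if (i : ℕ).testBit t then 1 else 0) (if (j : ℕ).testBit t then 1 else 0)

/-- The 2×2 non-binary polar kernel with rows (μ, 0) and (γ, δ). -/
noncomputable def G2 [Field F] (μ γ δ : F) : Matrix (Fin 2) (Fin 2) F := !![μ, 0; γ, δ]

/-- `Gk μ γ δ k = G2^{⊗k}`, the k-fold Kronecker power of the kernel. -/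
noncomputable def Gk [Field F] (μ γ δ : F) (k : ℕ) : Matrix (Fin (2 ^ k)) (Fin (2 ^ k)) F :=
  kron (G2 μ γ δ) k

/-- `g0inv μ γ δ k` : first column of the inverse of `G2^{⊗k}`. -/
noncomputable def g0inv [Field F] (μ γ δ : F) (k : ℕ) (j : Fin (2 ^ k)) : F :=
  (Gk μ γ δ k)⁻¹ j ⟨0, Nat.two_pow_pos k⟩

/-- `rk μ γ δ k` : last row of `G2^{⊗k}`. -/
noncomputable def rk [Field F] (μ γ δ : F) (k : ℕ) (j : Fin (2 ^ k)) : F :=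
  Gk μ γ δ k ⟨2 ^ k - 1, by have := Nat.two_pow_pos k; omega⟩ j

/-- codeword associated to an input vector `u`: `cᵀ = uᵀ · G2^{⊗k}`. -/
noncomputable def codeword [Field F] (μ γ δ : F) (k : ℕ) (u : Fin (2 ^ k) → F)
    (j : Fin (2 ^ k)) : F :=
  ∑ i, u i * Gk μ γ δ k i j

theorem index_lt {p q n a b : ℕ} (ha : a < q) (hb : b < p) (h : p * q = n) :
    p * a + b < n := by
  subst h
  have h1 : p * a + b < p * (a + 1) := by
    have hm : p * (a + 1) = p * a + p := by ring
    omega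
  have h2 : p * (a + 1) ≤ p * q := Nat.mul_le_mul le_rfl ha
  omega

theorem Gk_lower [Field F] (μ γ δ : F) (k : ℕ) (i j : Fin (2 ^ k)) (h : i < j) :
    Gk μ γ δ k i j = 0 := by
  have : ∃ t, (i : ℕ).testBit t = false ∧ (j : ℕ).testBit t = true := by
    by_contra hc
    push Not at hc
    have h2 : (j : ℕ) ≤ i := by
      apply Nat.le_of_testBit
      intro t ht
      by_contra h3
      exact hc t (by simpa using h3) ht
    have h3 : (i : ℕ) < j := h
    omega
  obtain ⟨t, h1, h2⟩ := this
  unfold Gk kron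
  have ht : t < k := by
    by_contra hk
    have := Nat.testBit_lt_two_pow (x := (j : ℕ)) (i := t)
      (lt_of_lt_of_le j.isLt (Nat.pow_le_pow_right (by norm_num) (by omega)))
    simp [this] at h2
  apply Finset.prod_eq_zero (Finset.mem_range.mpr ht)
  simp [h1, h2, G2]

theorem Gk_isUnit [Field F] (μ γ δ : F) (hμ : μ ≠ 0) (hδ : δ ≠ 0) (k : ℕ) :
    IsUnit (Gk μ γ δ k).det := by
  rw [Matrix.det_of_lowerTriangular (Gk μ γ δ k) (fun i j h => Gk_lower μ γ δ k i j h),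
    isUnit_iff_ne_zero]
  apply Finset.prod_ne_zero_iff.mpr
  intro i _
  unfold Gk kron
  apply Finset.prod_ne_zero_iff.mpr
  intro t _
  by_cases h : (i : ℕ).testBit t <;> simp [h, G2, hμ, hδ]

theorem testBit_four (n t : ℕ) : n.testBit (t + 2) = (n / 4).testBit t := by
  rw [Nat.testBit_add_one, Nat.testBit_add_one, Nat.div_div_eq_div_mul]

theorem Gk_split [Field F] (μ γ δ : F) (m : ℕ) (i j : Fin (2 ^ (m + 2)))
    (p a : Fin (2 ^ m)) (q b : Fin (2 ^ 2)) (hi : (i : ℕ) = 4 * p + q)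
    (hj : (j : ℕ) = 4 * a + b) :
    Gk μ γ δ (m + 2) i j = Gk μ γ δ m p a * Gk μ γ δ 2 q b := by
  have hq : (q : ℕ) < 4 := q.isLt
  have hb : (b : ℕ) < 4 := b.isLt
  have e1 : ∀ t, (i : ℕ).testBit (t + 2) = (p : ℕ).testBit t := by
    intro t
    rw [testBit_four]; congr 1; omega
  have e2 : ∀ t, (j : ℕ).testBit (t + 2) = (a : ℕ).testBit t := by
    intro t
    rw [testBit_four]; congr 1; omega
  have f0 : ∀ x y z : ℕ, x = 4 * y + z → x.testBit 0 = z.testBit 0 := by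
    intro x y z h
    rw [Nat.testBit_zero, Nat.testBit_zero]
    congr 2; omega
  have f1 : ∀ x y z : ℕ, x = 4 * y + z → x.testBit 1 = z.testBit 1 := by
    intro x y z h
    rw [Nat.testBit_add_one x 0, Nat.testBit_add_one z 0, Nat.testBit_zero, Nat.testBit_zero]
    congr 2; omega
  unfold Gk kron
  rw [Finset.prod_range_succ', Finset.prod_range_succ']
  simp only [add_assoc, Nat.reduceAdd, e1, e2, zero_add]
  rw [Finset.prod_range_succ, Finset.prod_range_one, f0 _ _ _ hi, f0 _ _ _ hj,
    f1 _ _ _ hi, f1 _ _ _ hj]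
  ring

/-- Paper's Theorem 5 (Type-IV node, with `k = m + 2 ≥ 2`): in characteristic 2, if the
first three input positions are frozen, then there exists `ρ` with
`∑_a g0inv^{(k−2)}(a)·c(4a+b) = r^{(2)}(b)·ρ` for every `b < 4`. -/
theorem stmt9 [Field F] [CharP F 2] (μ γ δ : F) (hμ : μ ≠ 0) (hγ : γ ≠ 0) (hδ : δ ≠ 0)
    (m : ℕ) (u : Fin (2 ^ (m + 2)) → F) (hu0 : u 0 = 0) (hu1 : u 1 = 0) (hu2 : u 2 = 0) :
    ∃ ρ : F, ∀ b : Fin (2 ^ 2),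
      (∑ a : Fin (2 ^ m), g0inv μ γ δ m a *
          codeword μ γ δ (m + 2) u
            ⟨4 * (a : ℕ) + (b : ℕ), by
              have ha := a.isLt; have hb := b.isLt
              have h4 : (2 : ℕ) ^ 2 = 4 := by norm_num
              have hpq : (2 : ℕ) ^ (m + 2) = 2 ^ m * 4 := by rw [pow_add]; norm_num
              omega⟩) = rk μ γ δ 2 b * ρ := by
  have h4 : (2 : ℕ) ^ 2 = 4 := by norm_num
  have hpq : (2 : ℕ) ^ (m + 2) = 2 ^ m * 4 := by rw [pow_add]; norm_num
  have hpos := Nat.two_pow_pos m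
  have v0 : ((0 : Fin (2 ^ (m + 2))) : ℕ) = 0 := rfl
  have v1 : ((1 : Fin (2 ^ (m + 2))) : ℕ) = 1 := by
    exact Nat.mod_eq_of_lt (a := 1) (b := 2 ^ (m + 2)) (by omega)
  have v2 : ((2 : Fin (2 ^ (m + 2))) : ℕ) = 2 :=
    Nat.mod_eq_of_lt (a := 2) (b := 2 ^ (m + 2)) (by omega)
  have key : ∀ p : Fin (2 ^ m), ∑ a, g0inv μ γ δ m a * Gk μ γ δ m p a
      = if (p : ℕ) = 0 then 1 else 0 := by
    intro p
    have := congrFun (congrFun (Matrix.mul_nonsing_inv _ (Gk_isUnit μ γ δ hμ hδ m)) p)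
      ⟨0, Nat.two_pow_pos m⟩
    rw [Matrix.mul_apply, Matrix.one_apply] at this
    simp only [Fin.ext_iff] at this
    rw [← this]
    exact Finset.sum_congr rfl fun a _ => mul_comm _ _
  refine ⟨u ⟨3, by omega⟩, fun b => ?_⟩
  have hb : (b : ℕ) < 4 := b.isLt
  simp only [codeword, Finset.mul_sum]
  rw [Finset.sum_comm]
  have step : ∀ i : Fin (2 ^ (m + 2)), (∑ a : Fin (2 ^ m), g0inv μ γ δ m a *
      (u i * Gk μ γ δ (m + 2) i ⟨4 * (a : ℕ) + (b : ℕ), by have := a.isLt; omega⟩))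
      = u i * Gk μ γ δ 2 ⟨(i : ℕ) % 4, by omega⟩ b * (if (i : ℕ) / 4 = 0 then 1 else 0) := by
    intro i
    have hi := i.isLt
    rw [← key ⟨(i : ℕ) / 4, by omega⟩, Finset.mul_sum]
    refine Finset.sum_congr rfl fun a _ => ?_
    rw [Gk_split μ γ δ m i _ ⟨(i : ℕ) / 4, by omega⟩ a ⟨(i : ℕ) % 4, by omega⟩ b
      (by simp only []; omega) rfl]
    ring
  rw [Finset.sum_congr rfl fun i _ => step i, Finset.sum_eq_single ⟨3, by omega⟩]
  · simp [rk, mul_comm]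
  · intro i _ hi
    have h3 : (i : ℕ) ≠ 3 := fun h => hi (Fin.ext h)
    by_cases h : (i : ℕ) / 4 = 0
    · have : u i = 0 := by
        have hc : (i : ℕ) = 0 ∨ (i : ℕ) = 1 ∨ (i : ℕ) = 2 := by omega
        rcases hc with h | h | h
        · rw [show i = 0 from Fin.ext (h.trans v0.symm), hu0]
        · rw [show i = 1 from Fin.ext (h.trans v1.symm), hu1]
        · rw [show i = 2 from Fin.ext (h.trans v2.symm), hu2]
      simp [this]
    · simp [h]
  · intro h
    exact absurd (Finset.mem_univ _) h
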